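/- arXiv:2401.12267 — 11 statements merged into one kernel-verified Lean document; each statement's English description precedes it below -/
import Mathlib

section
/- Let A : [0,∞) → [0,∞) be continuous and nondecreasing with A(0) = 0, let b > 0, T > 0, n ∈ ℕ and t ∈ [nT, (n+1)T) with A(nT) > 0 and A(t) > A(nT), and let 0 < ρ₁ < ρ₂ < 1. Let μᵢ = Γ(A(nT), b/(1−ρᵢ)) ∗ Γ(A(t)−A(nT), b) be the convolution of the two gamma measures (the law of the ARD1 deterioration level Y_t^{(i)} with efficiency ρᵢ), i = 1, 2. Then μ₂ ≺_icx μ₁ and μ₂ ≺_icv μ₁: for all x ≥ 0, ∫_x^∞ μ₂((u,∞)) du ≤ ∫_x^∞ μ₁((u,∞)) du, and ∫_0^x μ₂((−∞,u]) du ≥ ∫_0^x μ₁((−∞,u]) du. -/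
open ProbabilityTheory Set MeasureTheory

/-!
The laws `μ₁, μ₂` are in fact ordered in the usual stochastic order, which is stronger than both
conclusions. Put `rᵢ = b / (1 - ρᵢ)`, so that `r₁ < r₂`. If `X ∼ Γ(a, r₁)`, then
`(r₁ / r₂) X ∼ Γ(a, r₂)` (`map_mul_gammaMeasure`), hence for `Y` independent of `X` the variable
`(r₁ / r₂) X + Y` is at most `X + Y` almost surely, and `μ₂ (u, ∞) ≤ μ₁ (u, ∞)` for every `u`
(`gamma_conv_Ioi_le`). Both inequalities follow by integrating in `u`. For the tails over the
unbounded interval `(x, ∞)` monotonicity of the Bochner integral requires the larger tail to be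
integrable, which holds because `μ₁` has finite mean (`integrable_id_gamma_conv`,
`integrableOn_tail`).
-/

/-- Scaling: `γ(a, r)` pushed forward by `x ↦ (r / s) x` is `γ(a, s)`. -/
lemma map_mul_gammaMeasure {a r s : ℝ} (hr : 0 < r) (hs : 0 < s) :
    (gammaMeasure a r).map (fun x => r / s * x) = gammaMeasure a s := by
  have hc : 0 < r / s := div_pos hr hs
  have hmeas : Measurable (fun x : ℝ => r / s * x) := measurable_const_mul _
  have hpdf (a r : ℝ) : Measurable (gammaPDF a r) :=
    (measurable_gammaPDFReal a r).ennreal_ofReal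
  have hdens (x : ℝ) :
      gammaPDF a r x = ENNReal.ofReal (r / s) * gammaPDF a s (r / s * x) := by
    rw [gammaPDF_eq, gammaPDF_eq, ← ENNReal.ofReal_mul hc.le]
    congr 1
    by_cases hx : 0 ≤ x
    · rw [if_pos hx, if_pos (by positivity), Real.mul_rpow hc.le hx, Real.div_rpow hr.le hs.le,
        Real.rpow_sub_one hr.ne', Real.rpow_sub_one hs.ne']
      have h1 : s * (r / s * x) = r * x := by field_simp
      have := (Real.rpow_pos_of_pos hs a).ne'
      rw [h1]
      field_simp
    · rw [if_neg hx, if_neg (by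
        rw [not_le] at hx ⊢
        exact mul_neg_of_pos_of_neg hc hx), mul_zero]
  ext S hS
  rw [Measure.map_apply hmeas hS, gammaMeasure, gammaMeasure,
    withDensity_apply _ (hmeas hS), withDensity_apply _ hS]
  conv_rhs => rw [← Real.smul_map_volume_mul_left hc.ne']
  rw [Measure.restrict_smul, lintegral_smul_measure, setLIntegral_map hS (hpdf a s) hmeas,
    abs_of_pos hc, smul_eq_mul]
  simp_rw [hdens]
  exact lintegral_const_mul _ ((hpdf a s).comp hmeas)

lemma ae_nonneg_gammaMeasure (a r : ℝ) : ∀ᵐ x ∂gammaMeasure a r, 0 ≤ x := by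
  rw [ae_iff]
  simp only [not_le]
  change gammaMeasure a r (Iio 0) = 0
  rw [gammaMeasure, withDensity_apply _ measurableSet_Iio]
  exact lintegral_gammaPDF_of_nonpos le_rfl

/-- A gamma variable has finite mean: `x f_{a,r}(x) = (a / r) f_{a+1,r}(x)` for `x ≥ 0`, and
`f_{a+1,r}` has total mass one. -/
lemma integrable_id_gammaMeasure {a r : ℝ} (ha : 0 < a) (hr : 0 < r) :
    Integrable (fun x : ℝ => x) (gammaMeasure a r) := by
  refine ⟨measurable_id.aestronglyMeasurable, ?_⟩
  have hpdf (a : ℝ) : Measurable (gammaPDF a r) :=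
    (measurable_gammaPDFReal a r).ennreal_ofReal
  have hdens (x : ℝ) : gammaPDF a r x * ‖x‖ₑ = ENNReal.ofReal (a / r) * gammaPDF (a + 1) r x := by
    by_cases hx : 0 ≤ x
    · rw [gammaPDF_of_nonneg hx, gammaPDF_of_nonneg hx, Real.enorm_of_nonneg hx,
        ← ENNReal.ofReal_mul' hx, ← ENNReal.ofReal_mul (by positivity)]
      congr 1
      have hG := (Real.Gamma_pos_of_pos ha).ne'
      have hxa : x ^ a = x ^ (a - 1) * x := by
        rcases hx.eq_or_lt with rfl | hx
        · rw [Real.zero_rpow ha.ne', mul_zero]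
        · rw [Real.rpow_sub_one hx.ne']
          field_simp
      rw [Real.Gamma_add_one ha.ne', Real.rpow_add_one hr.ne', add_sub_cancel_right, hxa]
      field_simp
    · rw [gammaPDF_of_neg (not_le.1 hx), gammaPDF_of_neg (not_le.1 hx), zero_mul, mul_zero]
  rw [HasFiniteIntegral, gammaMeasure,
    lintegral_withDensity_eq_lintegral_mul _ (hpdf a) measurable_enorm]
  simp only [Pi.mul_apply, hdens]
  rw [lintegral_const_mul _ (hpdf _), lintegral_gammaPDF_eq_one (by positivity) hr, mul_one]
  exact ENNReal.ofReal_lt_top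

/-- Coupling `c X + Y ≤ X + Y` for `0 ≤ c ≤ 1` and `X ≥ 0`: the convolution is stochastically
decreasing in the rate of its first factor. -/
lemma gamma_conv_Ioi_le {a r s : ℝ} (ha : 0 < a) (hr : 0 < r) (hrs : r ≤ s) (ν : Measure ℝ)
    [IsProbabilityMeasure ν] (u : ℝ) :
    ((gammaMeasure a s).conv ν) (Ioi u) ≤ ((gammaMeasure a r).conv ν) (Ioi u) := by
  have hs : 0 < s := hr.trans_le hrs
  have := isProbabilityMeasure_gammaMeasure ha hr
  have := isProbabilityMeasure_gammaMeasure ha hs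
  have hprod : (gammaMeasure a s).prod ν =
      ((gammaMeasure a r).prod ν).map (Prod.map (fun x => r / s * x) id) := by
    rw [← Measure.map_prod_map _ _ (measurable_const_mul _) measurable_id,
      map_mul_gammaMeasure hr hs, Measure.map_id]
  rw [Measure.conv, Measure.conv, hprod, Measure.map_map (by fun_prop) (by fun_prop),
    Measure.map_apply (by fun_prop) measurableSet_Ioi,
    Measure.map_apply (by fun_prop) measurableSet_Ioi]
  refine measure_mono_ae ?_
  have hae : ∀ᵐ p ∂(gammaMeasure a r).prod ν, 0 ≤ p.1 :=
    Measure.quasiMeasurePreserving_fst.ae (ae_nonneg_gammaMeasure a r)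
  filter_upwards [hae] with p hp hu
  have hle : r / s * p.1 ≤ p.1 := mul_le_of_le_one_left hp ((div_le_one hs).2 hrs)
  change u < r / s * p.1 + p.2 at hu
  change u < p.1 + p.2
  linarith

/-- Layer cake: a law on `ℝ` with finite mean has an integrable tail on `(0, ∞)`. -/
lemma integrableOn_tail {μ : Measure ℝ} [IsFiniteMeasure μ]
    (hμ : Integrable (fun x : ℝ => x) μ) :
    IntegrableOn (fun u => (μ (Ioi u)).toReal) (Ioi 0) := by
  have hanti : Antitone (fun u : ℝ => μ (Ioi u)) := fun _ _ h => measure_mono (Ioi_subset_Ioi h)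
  refine integrable_toReal_of_lintegral_ne_top hanti.measurable.aemeasurable ?_
  have hlc := lintegral_eq_lintegral_meas_lt μ (f := fun x : ℝ => |x|)
    (ae_of_all _ fun x => abs_nonneg x) hμ.abs.aemeasurable
  have hfin : ∫⁻ x, ENNReal.ofReal |x| ∂μ ≠ ⊤ := hμ.abs.lintegral_lt_top.ne
  rw [hlc] at hfin
  exact ne_top_of_le_ne_top hfin
    (lintegral_mono fun u => measure_mono fun x (hx : u < x) => hx.trans_le (le_abs_self x))

lemma integrable_id_gamma_conv {a r a' r' : ℝ} (ha : 0 < a) (hr : 0 < r) (ha' : 0 < a')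
    (hr' : 0 < r') :
    Integrable (fun x : ℝ => x) ((gammaMeasure a r).conv (gammaMeasure a' r')) := by
  have := isProbabilityMeasure_gammaMeasure ha hr
  have := isProbabilityMeasure_gammaMeasure ha' hr'
  rw [Measure.conv, integrable_map_measure (by fun_prop) (by fun_prop)]
  exact ((integrable_id_gammaMeasure ha hr).comp_fst _).add
    ((integrable_id_gammaMeasure ha' hr').comp_snd _)

/-- For the ARD1 deterioration laws
`μᵢ = Γ(A(nT), b/(1−ρᵢ)) ∗ Γ(A(t)−A(nT), b)` with `0 < ρ₁ < ρ₂ < 1`,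
one has `μ₂ ≺_icx μ₁` and `μ₂ ≺_icv μ₁`. -/
theorem ARD1_deterioration_decreases_in_rho_icx_icv
    (A : ℝ → ℝ) (hAcont : ContinuousOn A (Ici 0)) (hAmono : MonotoneOn A (Ici 0))
    (hAnonneg : ∀ s, 0 ≤ s → 0 ≤ A s) (hA0 : A 0 = 0)
    (b T : ℝ) (hb : 0 < b) (hT : 0 < T) (n : ℕ) (t : ℝ)
    (ht₁ : (n : ℝ) * T ≤ t) (ht₂ : t < ((n : ℝ) + 1) * T)
    (hAnT : 0 < A ((n : ℝ) * T)) (hAt : A ((n : ℝ) * T) < A t)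
    (ρ₁ ρ₂ : ℝ) (hρ₁ : 0 < ρ₁) (hρ₁₂ : ρ₁ < ρ₂) (hρ₂ : ρ₂ < 1)
    (μ₁ μ₂ : Measure ℝ)
    (hμ₁ : μ₁ = (gammaMeasure (A ((n : ℝ) * T)) (b / (1 - ρ₁))).conv
      (gammaMeasure (A t - A ((n : ℝ) * T)) b))
    (hμ₂ : μ₂ = (gammaMeasure (A ((n : ℝ) * T)) (b / (1 - ρ₂))).conv
      (gammaMeasure (A t - A ((n : ℝ) * T)) b)) :
    (∀ x : ℝ, 0 ≤ x →
      ∫ u in Ioi x, (μ₂ (Ioi u)).toReal ≤ ∫ u in Ioi x, (μ₁ (Ioi u)).toReal) ∧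
    (∀ x : ℝ, 0 ≤ x →
      ∫ u in (0:ℝ)..x, (μ₁ (Iic u)).toReal ≤ ∫ u in (0:ℝ)..x, (μ₂ (Iic u)).toReal) := by
  have hr₁ : 0 < b / (1 - ρ₁) := div_pos hb (by linarith)
  have hr : b / (1 - ρ₁) ≤ b / (1 - ρ₂) :=
    div_le_div_of_nonneg_left hb.le (by linarith) (by linarith)
  have ha' : 0 < A t - A ((n : ℝ) * T) := sub_pos.2 hAt
  have := isProbabilityMeasure_gammaMeasure hAnT hr₁
  have := isProbabilityMeasure_gammaMeasure hAnT (hr₁.trans_le hr)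
  have := isProbabilityMeasure_gammaMeasure ha' hb
  have hP₁ : IsProbabilityMeasure μ₁ := by rw [hμ₁]; infer_instance
  have hP₂ : IsProbabilityMeasure μ₂ := by rw [hμ₂]; infer_instance
  have hle (u : ℝ) : μ₂ (Ioi u) ≤ μ₁ (Ioi u) := by
    rw [hμ₁, hμ₂]
    exact gamma_conv_Ioi_le hAnT hr₁ hr _ u
  have hint₁ : Integrable (fun x : ℝ => x) μ₁ := by
    rw [hμ₁]
    exact integrable_id_gamma_conv hAnT hr₁ ha' hb
  refine ⟨fun x hx => ?_, fun x hx => ?_⟩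
  · refine integral_mono_of_nonneg (ae_of_all _ fun u => ENNReal.toReal_nonneg)
      ((integrableOn_tail hint₁).mono_set (Ioi_subset_Ioi hx)) (ae_of_all _ fun u => ?_)
    exact ENNReal.toReal_mono (measure_ne_top _ _) (hle u)
  · have hmono (μ : Measure ℝ) [IsProbabilityMeasure μ] :
        Monotone (fun u : ℝ => (μ (Iic u)).toReal) := fun _ _ h =>
      ENNReal.toReal_mono (measure_ne_top _ _) (measure_mono (Iic_subset_Iic.2 h))
    refine intervalIntegral.integral_mono_on hx (hmono μ₁).intervalIntegrable
      (hmono μ₂).intervalIntegrable fun u _ => ENNReal.toReal_mono (measure_ne_top _ _) ?_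
    rw [← compl_Ioi, prob_compl_eq_one_sub measurableSet_Ioi,
      prob_compl_eq_one_sub measurableSet_Ioi]
    exact tsub_le_tsub_left (hle u) 1
end

section
/- Let A : [0,∞) → [0,∞) be continuous, nondecreasing and concave with A(0) = 0 and let ρ₁, ρ₂ ∈ (0,1). If A((1−ρ₂)t) ≥ (1−ρ₁)A(t) for all t > 0, then A(t − ρ₂nT) ≥ A(t) − ρ₁A(nT) for all T > 0, all n ∈ ℕ and all t ∈ [nT, (n+1)T) (i.e., E[Z_t^{(2)}] ≥ E[Y_t^{(1)}] for all t, T > 0). -/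
/-! Put `s = nT` and `t = s + u` with `u ≥ 0`. A concave function has decreasing increments, so
shifting the interval `[(1 - ρ₂)s, s]` to the right by `u` does not increase the increment of `A`:
`A (s + u) - A ((1 - ρ₂)s + u) ≤ A s - A ((1 - ρ₂)s)`. The hypothesis at `s` bounds the right-hand
side by `ρ₁ A s`, and `(1 - ρ₂)s + u = t - ρ₂ s`. -/

open Set

/-- Increments of a concave function over intervals of fixed length decrease under right shifts. -/
theorem concaveOn_add_le_add_of_shift {A : ℝ → ℝ} {S : Set ℝ} (hA : ConcaveOn ℝ S A)
    {a s u : ℝ} (has : a < s) (hu : 0 ≤ u) (ha : a ∈ S) (hsu : s + u ∈ S) :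
    A a + A (s + u) ≤ A s + A (a + u) := by
  have hd : 0 < s - a + u := by linarith
  -- `s` and `a + u` are convex combinations of `a` and `s + u` with the two weights swapped.
  have hp : 0 ≤ u / (s - a + u) := by positivity
  have hq : 0 ≤ (s - a) / (s - a + u) := div_nonneg (by linarith) hd.le
  have hpq : u / (s - a + u) + (s - a) / (s - a + u) = 1 := by field_simp; ring
  have h₁ := hA.2 ha hsu hp hq hpq
  have h₂ := hA.2 ha hsu hq hp (by linarith)
  have e₁ : u / (s - a + u) * a + (s - a) / (s - a + u) * (s + u) = s := by field_simp; ring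
  have e₂ : (s - a) / (s - a + u) * a + u / (s - a + u) * (s + u) = a + u := by field_simp; ring
  simp only [smul_eq_mul] at h₁ h₂
  rw [e₁] at h₁
  rw [e₂] at h₂
  linear_combination h₁ + h₂ - (A a + A (s + u)) * hpq

/-- If `A` is concave and `A((1−ρ₂)t) ≥ (1−ρ₁)A(t)` for all `t > 0`, then
`A(t − ρ₂nT) ≥ A(t) − ρ₁A(nT)` for all `T > 0`, all `n ∈ ℕ` and all `t ∈ [nT, (n+1)T)`
(i.e. `E[Z_t^{(2)}] ≥ E[Y_t^{(1)}]` for all `t, T > 0`). -/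
theorem shape_inequality_implies_mean_comparison_concave
    (A : ℝ → ℝ) (hAcont : ContinuousOn A (Ici 0)) (hAmono : MonotoneOn A (Ici 0))
    (hAconc : ConcaveOn ℝ (Ici 0) A)
    (hAnonneg : ∀ s, 0 ≤ s → 0 ≤ A s) (hA0 : A 0 = 0)
    (ρ₁ ρ₂ : ℝ) (hρ₁ : ρ₁ ∈ Ioo (0:ℝ) 1) (hρ₂ : ρ₂ ∈ Ioo (0:ℝ) 1)
    (h : ∀ t : ℝ, 0 < t → (1 - ρ₁) * A t ≤ A ((1 - ρ₂) * t)) :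
    ∀ T : ℝ, 0 < T → ∀ n : ℕ, ∀ t : ℝ, (n : ℝ) * T ≤ t → t < ((n : ℝ) + 1) * T →
      A t - ρ₁ * A ((n : ℝ) * T) ≤ A (t - ρ₂ * ((n : ℝ) * T)) := by
  intro T hT n t hnt _
  have hs : 0 ≤ (n : ℝ) * T := by positivity
  generalize (n : ℝ) * T = s at hnt hs ⊢
  rcases hs.eq_or_lt with rfl | hs
  · simp [hA0]
  have has : (1 - ρ₂) * s < s := by nlinarith [hρ₂.1]
  have ha : 0 ≤ (1 - ρ₂) * s := mul_nonneg (by linarith [hρ₂.2]) hs.le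
  have key := concaveOn_add_le_add_of_shift hAconc has (sub_nonneg.2 hnt) (mem_Ici.2 ha)
    (mem_Ici.2 (by linarith))
  rw [show s + (t - s) = t by ring, show (1 - ρ₂) * s + (t - s) = t - ρ₂ * s by ring] at key
  linarith [h s hs]
end

section
/- Let A : [0,∞) → [0,∞) be continuous, nondecreasing and concave with A(0) = 0 and let ρ₁, ρ₂ ∈ (0,1) with ρ₂ ≤ ρ₁. Then A(t − ρ₂nT) ≥ A(t) − ρ₁A(nT) for all T > 0, all n ∈ ℕ and all t ∈ [nT, (n+1)T) (i.e., E[Z_t^{(2)}] ≥ E[Y_t^{(1)}] for all t, T > 0). -/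
open Set

/-!
With `s = nT ≤ t`, the point `t - ρ₂ s` is the convex combination `ρ₂ (t - s) + (1 - ρ₂) t`, so
concavity gives `A (t - ρ₂ s) ≥ A t - ρ₂ (A t - A (t - s))`. A concave function vanishing at `0`
is subadditive (`subadd_of_concaveOn`), hence `A t - A (t - s) ≤ A s`, and `ρ₂ A s ≤ ρ₁ A s`.
-/

/-- Subadditivity of a concave function vanishing at the origin, for the splitting
`t = s + (t - s)`: both summands lie on the segment from `0` to `t`, where the graph of `A` is
above its chord. -/
lemma subadd_of_concaveOn {A : ℝ → ℝ} (hA : ConcaveOn ℝ (Ici 0) A) (hA0 : A 0 = 0)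
    {s t : ℝ} (hs : 0 ≤ s) (hst : s ≤ t) : A t ≤ A s + A (t - s) := by
  rcases hs.eq_or_lt with rfl | hs'
  · simp [hA0]
  have ht : 0 < t := hs'.trans_le hst
  have chord : ∀ u, 0 ≤ u → u ≤ t → u / t * A t ≤ A u := by
    intro u hu hut
    have h := hA.2 (mem_Ici.2 ht.le) (mem_Ici.2 le_rfl) (div_nonneg hu ht.le)
      (sub_nonneg.2 ((div_le_one ht).2 hut)) (by ring)
    simpa [hA0, div_mul_cancel₀ u ht.ne'] using h
  have h₁ := chord s hs hst
  have h₂ := chord (t - s) (by linarith) (by linarith)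
  have h₃ : s / t * A t + (t - s) / t * A t = A t := by
    field_simp
    ring
  linarith

/-- If `A` is concave and `ρ₂ ≤ ρ₁`, then
`A(t − ρ₂nT) ≥ A(t) − ρ₁A(nT)` for all `T > 0`, all `n ∈ ℕ` and all `t ∈ [nT, (n+1)T)`
(i.e. `E[Z_t^{(2)}] ≥ E[Y_t^{(1)}]` for all `t, T > 0`). -/
theorem mean_comparison_concave_of_rho_le
    (A : ℝ → ℝ) (hAcont : ContinuousOn A (Ici 0)) (hAmono : MonotoneOn A (Ici 0))
    (hAconc : ConcaveOn ℝ (Ici 0) A)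
    (hAnonneg : ∀ s, 0 ≤ s → 0 ≤ A s) (hA0 : A 0 = 0)
    (ρ₁ ρ₂ : ℝ) (hρ₁ : ρ₁ ∈ Ioo (0:ℝ) 1) (hρ₂ : ρ₂ ∈ Ioo (0:ℝ) 1) (hρ : ρ₂ ≤ ρ₁) :
    ∀ T : ℝ, 0 < T → ∀ n : ℕ, ∀ t : ℝ, (n : ℝ) * T ≤ t → t < ((n : ℝ) + 1) * T →
      A t - ρ₁ * A ((n : ℝ) * T) ≤ A (t - ρ₂ * ((n : ℝ) * T)) := by
  intro T hT n t hnt _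
  have hs : 0 ≤ (n : ℝ) * T := by positivity
  generalize (n : ℝ) * T = s at hs hnt ⊢
  have hsub := subadd_of_concaveOn hAconc hA0 hs hnt
  have hconc := hAconc.2 (mem_Ici.2 (sub_nonneg.2 hnt)) (mem_Ici.2 (hs.trans hnt))
    hρ₂.1.le (sub_nonneg.2 hρ₂.2.le) (by ring)
  simp only [smul_eq_mul] at hconc
  rw [show ρ₂ * (t - s) + (1 - ρ₂) * t = t - ρ₂ * s by ring] at hconc
  have h₁ := mul_le_mul_of_nonneg_left hsub hρ₂.1.le
  have h₂ := mul_le_mul_of_nonneg_right hρ (hAnonneg s hs)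
  linarith
end

section
/- Let A : [0,∞) → [0,∞) be continuous, nondecreasing and concave with A(0) = 0 and let ρ₁, ρ₂ ∈ (0,1). If A((1−ρ₂)t) ≥ (1−ρ₁)²A(t) for all t > 0, then A(t − ρ₂nT) ≥ A(t) − ρ₁(2−ρ₁)A(nT) for all T > 0, all n ∈ ℕ and all t ∈ [nT, (n+1)T) (i.e., Var(Z_t^{(2)}) ≥ Var(Y_t^{(1)}) for all t, T > 0). -/
open Set

/-!
A concave function has decreasing increments. With `s = nT` and `t ≥ s`, the increment of `A` over
`[t - ρ₂s, t]` is therefore at most its increment over `[(1 - ρ₂)s, s]`, and the latter is at most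
`A s - (1 - ρ₁)² A s = ρ₁(2 - ρ₁) A s` by the shape inequality at `s`.
-/

/-- Decreasing increments of a concave function, for increments of fixed length `d`. -/
theorem ConcaveOn.sub_le_sub_of_shift {S : Set ℝ} {A : ℝ → ℝ} (hA : ConcaveOn ℝ S A)
    {s t d : ℝ} (hd : 0 < d) (hst : s ≤ t) (hs : s - d ∈ S) (ht : t ∈ S) :
    A t - A (t - d) ≤ A s - A (s - d) := by
  have hL : 0 < t - s + d := by linarith
  have hl : 0 ≤ d / (t - s + d) := by positivity
  have hm : 0 ≤ (t - s) / (t - s + d) := div_nonneg (by linarith) hL.le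
  have hlm : d / (t - s + d) + (t - s) / (t - s + d) = 1 := by
    field_simp
    ring
  -- `t - d` and `s` are convex combinations of `s - d` and `t` with the two weights exchanged.
  have h₁ := hA.2 hs ht hl hm hlm
  have h₂ := hA.2 hs ht hm hl (by rw [add_comm]; exact hlm)
  have e₁ : d / (t - s + d) * (s - d) + (t - s) / (t - s + d) * t = t - d := by
    field_simp
    ring
  have e₂ : (t - s) / (t - s + d) * (s - d) + d / (t - s + d) * t = s := by
    field_simp
    ring
  simp only [smul_eq_mul, e₁, e₂] at h₁ h₂
  linear_combination h₁ + h₂ - (A (s - d) + A t) * hlm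

/-- If `A` is concave and `A((1−ρ₂)t) ≥ (1−ρ₁)²A(t)` for all `t > 0`, then
`A(t − ρ₂nT) ≥ A(t) − ρ₁(2−ρ₁)A(nT)` for all `T > 0`, all `n ∈ ℕ` and all
`t ∈ [nT, (n+1)T)` (i.e. `Var(Z_t^{(2)}) ≥ Var(Y_t^{(1)})` for all `t, T > 0`). -/
theorem shape_inequality_implies_variance_comparison_concave
    (A : ℝ → ℝ) (hAcont : ContinuousOn A (Ici 0)) (hAmono : MonotoneOn A (Ici 0))
    (hAconc : ConcaveOn ℝ (Ici 0) A)
    (hAnonneg : ∀ s, 0 ≤ s → 0 ≤ A s) (hA0 : A 0 = 0)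
    (ρ₁ ρ₂ : ℝ) (hρ₁ : ρ₁ ∈ Ioo (0:ℝ) 1) (hρ₂ : ρ₂ ∈ Ioo (0:ℝ) 1)
    (h : ∀ t : ℝ, 0 < t → (1 - ρ₁) ^ 2 * A t ≤ A ((1 - ρ₂) * t)) :
    ∀ T : ℝ, 0 < T → ∀ n : ℕ, ∀ t : ℝ, (n : ℝ) * T ≤ t → t < ((n : ℝ) + 1) * T →
      A t - ρ₁ * (2 - ρ₁) * A ((n : ℝ) * T) ≤ A (t - ρ₂ * ((n : ℝ) * T)) := by
  intro T hT n t hnt _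
  rcases Nat.eq_zero_or_pos n with rfl | hn
  · simp [hA0]
  have hs : 0 < (n : ℝ) * T := mul_pos (Nat.cast_pos.mpr hn) hT
  generalize (n : ℝ) * T = s at hnt hs ⊢
  have e : s - ρ₂ * s = (1 - ρ₂) * s := by ring
  have hmem : s - ρ₂ * s ∈ Ici (0 : ℝ) := by
    rw [e]
    exact mul_nonneg (by linarith [hρ₂.2]) hs.le
  have hinc := hAconc.sub_le_sub_of_shift (mul_pos hρ₂.1 hs) hnt hmem (hs.le.trans hnt)
  have hshape := h s hs
  rw [← e] at hshape
  linarith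
end

section
/- Let A : [0,∞) → [0,∞) be continuous, nondecreasing and concave with A(0) = 0 and let ρ₁, ρ₂ ∈ (0,1) with 1 − ρ₂ ≥ (1 − ρ₁)². Then A(t − ρ₂nT) ≥ A(t) − ρ₁(2−ρ₁)A(nT) for all T > 0, all n ∈ ℕ and all t ∈ [nT, (n+1)T) (i.e., Var(Z_t^{(2)}) ≥ Var(Y_t^{(1)}) for all t, T > 0). -/
/-!
Write `s = nT` and `c = ρ₁(2 - ρ₁) = 1 - (1 - ρ₁)²`, so that the hypothesis on the efficiencies
reads `ρ₂ ≤ c`. The increments of a concave function over an interval of fixed length decrease as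
the interval moves to the right (`ConcaveOn.add_le_add_of_endpoints`), hence
`A t - A (t - ρ₂ s) ≤ A s - A ((1 - ρ₂) s)`. Concavity and `A 0 = 0` give
`(1 - ρ₂) A s ≤ A ((1 - ρ₂) s)`, so the right-hand side is at most `ρ₂ A s ≤ c A s`.
-/

open Set

/-- For a concave function, among pairs of points with a given sum, the sum of the values is
smallest at the outermost pair. -/
lemma ConcaveOn.add_le_add_of_endpoints {S : Set ℝ} {A : ℝ → ℝ} (hA : ConcaveOn ℝ S A)
    {a b h : ℝ} (ha : a ∈ S) (hb : b ∈ S) (hh : 0 ≤ h) (hab : a + h ≤ b) :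
    A a + A b ≤ A (a + h) + A (b - h) := by
  rcases hh.eq_or_lt with rfl | hpos
  · simp
  have hd : 0 < b - a := by linarith
  have hw : 0 ≤ h / (b - a) := by positivity
  have hw' : 0 ≤ 1 - h / (b - a) := by
    have : h / (b - a) ≤ 1 := (div_le_one hd).2 (by linarith)
    linarith
  have h1 := hA.2 ha hb hw' hw (by ring)
  have h2 := hA.2 ha hb hw hw' (by ring)
  have e : h / (b - a) * (b - a) = h := div_mul_cancel₀ h hd.ne'
  simp only [smul_eq_mul] at h1 h2
  rw [show (1 - h / (b - a)) * a + h / (b - a) * b = a + h by linear_combination e] at h1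
  rw [show h / (b - a) * a + (1 - h / (b - a)) * b = b - h by linear_combination -e] at h2
  linarith

/-- If `A` is concave and `1 − ρ₂ ≥ (1 − ρ₁)²`, then
`A(t − ρ₂nT) ≥ A(t) − ρ₁(2−ρ₁)A(nT)` for all `T > 0`, all `n ∈ ℕ` and all
`t ∈ [nT, (n+1)T)` (i.e. `Var(Z_t^{(2)}) ≥ Var(Y_t^{(1)})` for all `t, T > 0`). -/
theorem variance_comparison_concave_of_rho_cond
    (A : ℝ → ℝ) (hAcont : ContinuousOn A (Ici 0)) (hAmono : MonotoneOn A (Ici 0))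
    (hAconc : ConcaveOn ℝ (Ici 0) A)
    (hAnonneg : ∀ s, 0 ≤ s → 0 ≤ A s) (hA0 : A 0 = 0)
    (ρ₁ ρ₂ : ℝ) (hρ₁ : ρ₁ ∈ Ioo (0:ℝ) 1) (hρ₂ : ρ₂ ∈ Ioo (0:ℝ) 1)
    (hρ : (1 - ρ₁) ^ 2 ≤ 1 - ρ₂) :
    ∀ T : ℝ, 0 < T → ∀ n : ℕ, ∀ t : ℝ, (n : ℝ) * T ≤ t → t < ((n : ℝ) + 1) * T →
      A t - ρ₁ * (2 - ρ₁) * A ((n : ℝ) * T) ≤ A (t - ρ₂ * ((n : ℝ) * T)) := by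
  intro T hT n t ht _
  have hs : 0 ≤ (n : ℝ) * T := by positivity
  generalize (n : ℝ) * T = s at *
  obtain ⟨hρ0, hρ1⟩ := hρ₂
  have h0 : 0 ≤ (1 - ρ₂) * s := mul_nonneg (by linarith) hs
  have hshift := hAconc.add_le_add_of_endpoints (a := (1 - ρ₂) * s) (b := t) (h := ρ₂ * s)
    h0 (hs.trans ht) (mul_nonneg hρ0.le hs) (by linarith)
  rw [show (1 - ρ₂) * s + ρ₂ * s = s by ring] at hshift
  have hstar : (1 - ρ₂) * A s ≤ A ((1 - ρ₂) * s) := by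
    have := hAconc.2 (mem_Ici.2 hs) (mem_Ici.2 le_rfl)
      (show 0 ≤ 1 - ρ₂ by linarith) hρ0.le (by ring)
    simpa [hA0] using this
  have hc : ρ₂ * A s ≤ ρ₁ * (2 - ρ₁) * A s :=
    mul_le_mul_of_nonneg_right (by linarith) (hAnonneg s hs)
  linarith
end

section
/- Let α > 0, 0 < β ≤ 1 and ρ₁, ρ₂ ∈ (0,1). Then the following are equivalent: (i) α(t − ρ₂nT)^β ≥ αt^β − ρ₁α(nT)^β for all T > 0, all n ∈ ℕ and all t ∈ [nT, (n+1)T) (i.e., E[Z_t^{(2)}] ≥ E[Y_t^{(1)}] for all t, T > 0 when the shape function is A(t) = αt^β); (ii) (1−ρ₂)^β ≥ 1 − ρ₁. -/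
/-!
Write `s = nT`. Since `x ↦ x ^ β` is concave on `[0, ∞)`, its increments over intervals of fixed
length `c = ρ₂ s` decrease (`rpow_increment_le`), so `t ^ β - (t - ρ₂ s) ^ β` for `t ≥ s` is at most
its value at `t = s`, which is `s ^ β * (1 - (1 - ρ₂) ^ β)`. The comparison therefore holds for all
`t` exactly when it holds at `t = s`, where it reads `1 - (1 - ρ₂) ^ β ≤ ρ₁` once `s > 0`.
-/

open Set Real

/-- Increments of a concave power over intervals of equal length `c` decrease from left to right:
`s` and `t - c` lie between `s - c` and `t` at mirrored positions, so concavity applies to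
complementary convex combinations. -/
lemma rpow_increment_le {β s t c : ℝ} (hβ₀ : 0 ≤ β) (hβ₁ : β ≤ 1) (hc : 0 < c) (hcs : c ≤ s)
    (hst : s ≤ t) : t ^ β - (t - c) ^ β ≤ s ^ β - (s - c) ^ β := by
  have hd : 0 < t - (s - c) := by linarith
  have hconc := (Real.concaveOn_rpow hβ₀ hβ₁).2
  have hx : s - c ∈ Ici (0 : ℝ) := by simp only [mem_Ici]; linarith
  have ht : t ∈ Ici (0 : ℝ) := by simp only [mem_Ici]; linarith
  have hw₀ : 0 ≤ c / (t - (s - c)) := by positivity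
  have hv₀ : 0 ≤ (t - s) / (t - (s - c)) := div_nonneg (by linarith) hd.le
  have hsum : (t - s) / (t - (s - c)) + c / (t - (s - c)) = 1 := by
    rw [← add_div, div_eq_one_iff_eq hd.ne']; ring
  have h₁ := hconc hx ht hv₀ hw₀ hsum
  have h₂ := hconc hx ht hw₀ hv₀ (by rw [add_comm]; exact hsum)
  have e₁ : (t - s) / (t - (s - c)) * (s - c) + c / (t - (s - c)) * t = s := by
    field_simp; ring
  have e₂ : c / (t - (s - c)) * (s - c) + (t - s) / (t - (s - c)) * t = t - c := by
    field_simp; ring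
  simp only [smul_eq_mul, e₁, e₂] at h₁ h₂
  have key : (s - c) ^ β + t ^ β =
      ((t - s) / (t - (s - c)) + c / (t - (s - c))) * ((s - c) ^ β + t ^ β) := by
    rw [hsum, one_mul]
  linarith

/-- For the power-law shape function `A(t) = αt^β` with `0 < β ≤ 1`,
the mean comparison `E[Z_t^{(2)}] ≥ E[Y_t^{(1)}]` for all `t, T > 0` holds if and only if
`(1−ρ₂)^β ≥ 1 − ρ₁`. -/
theorem power_law_mean_comparison_iff
    (α β ρ₁ ρ₂ : ℝ) (hα : 0 < α) (hβ₀ : 0 < β) (hβ₁ : β ≤ 1)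
    (hρ₁ : ρ₁ ∈ Ioo (0:ℝ) 1) (hρ₂ : ρ₂ ∈ Ioo (0:ℝ) 1) :
    (∀ T : ℝ, 0 < T → ∀ n : ℕ, ∀ t : ℝ, (n : ℝ) * T ≤ t → t < ((n : ℝ) + 1) * T →
      α * t ^ β - ρ₁ * (α * ((n : ℝ) * T) ^ β) ≤ α * (t - ρ₂ * ((n : ℝ) * T)) ^ β)
    ↔ 1 - ρ₁ ≤ (1 - ρ₂) ^ β := by
  obtain ⟨hρ₂₀, hρ₂₁⟩ := hρ₂
  constructor
  · intro h
    -- By homogeneity, the first repair time `t = T = 1` already gives the condition.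
    have h₁ := h 1 one_pos 1 1 (by norm_num) (by norm_num)
    simp only [Nat.cast_one, mul_one, Real.one_rpow] at h₁
    refine le_of_mul_le_mul_left ?_ hα
    linarith
  · intro h T hT n t hnt _
    have hs₀ : 0 ≤ (n : ℝ) * T := by positivity
    generalize (n : ℝ) * T = s at hs₀ hnt ⊢
    rcases hs₀.eq_or_lt with rfl | hs
    · simp [Real.zero_rpow hβ₀.ne']
    · have hinc := rpow_increment_le hβ₀.le hβ₁ (mul_pos hρ₂₀ hs)
        (mul_le_of_le_one_left hs.le hρ₂₁.le) hnt
      have hfac : (s - ρ₂ * s) ^ β = (1 - ρ₂) ^ β * s ^ β := by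
        rw [← Real.mul_rpow (by linarith) hs.le]; ring_nf
      rw [hfac] at hinc
      have hmul := mul_le_mul_of_nonneg_right h (Real.rpow_nonneg hs.le β)
      have hfin : t ^ β - ρ₁ * s ^ β ≤ (t - ρ₂ * s) ^ β := by linarith
      have := mul_le_mul_of_nonneg_left hfin hα.le
      linarith
end

section
/- Let α > 0, 0 < β ≤ 1 and ρ₁, ρ₂ ∈ (0,1). Then the following are equivalent: (i) α(t − ρ₂nT)^β ≥ αt^β − ρ₁(2−ρ₁)α(nT)^β for all T > 0, all n ∈ ℕ and all t ∈ [nT, (n+1)T) (i.e., Var(Z_t^{(2)}) ≥ Var(Y_t^{(1)}) for all t, T > 0 when the shape function is A(t) = αt^β); (ii) (1−ρ₂)^β ≥ (1 − ρ₁)². -/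
/-!
Taking `T = n = t = 1` in the variance comparison gives the power inequality. Conversely, put
`s = nT`. Since `x ↦ x ^ β` is concave for `0 < β ≤ 1`, its increments over intervals of the fixed
length `ρ₂ s` decrease, so the comparison at `t ≥ s` follows from the one at the repair time
`t = s`. There, homogeneity factors out `s ^ β` and leaves exactly the power inequality, because
`1 - ρ₁ (2 - ρ₁) = (1 - ρ₁) ^ 2`.
-/

open Set Real

/-- Decreasing increments of `x ↦ x ^ β`: the increment over `[t - a, t]` is at most the one over
`[s - a, s]` when `s ≤ t`. -/
lemma rpow_increment_antitone {β a s t : ℝ} (hβ₀ : 0 < β) (hβ₁ : β ≤ 1)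
    (ha : 0 < a) (has : a ≤ s) (hst : s ≤ t) :
    t ^ β - (t - a) ^ β ≤ s ^ β - (s - a) ^ β := by
  have hc := Real.concaveOn_rpow hβ₀.le hβ₁
  have hd : 0 < t - s + a := by linarith
  have hx : s - a ∈ Ici (0 : ℝ) := sub_nonneg.2 has
  have hy : t ∈ Ici (0 : ℝ) := mem_Ici.2 (by linarith)
  have hl : 0 ≤ (t - s) / (t - s + a) := div_nonneg (by linarith) hd.le
  have hm : 0 ≤ a / (t - s + a) := div_nonneg ha.le hd.le
  have hlm : (t - s) / (t - s + a) + a / (t - s + a) = 1 := by field_simp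
  -- `s` and `t - a` are convex combinations of `s - a` and `t` with exchanged weights.
  have h₁ := hc.2 hx hy hl hm hlm
  have h₂ := hc.2 hx hy hm hl (by linarith)
  simp only [smul_eq_mul] at h₁ h₂
  have e₁ : (t - s) / (t - s + a) * (s - a) + a / (t - s + a) * t = s := by
    field_simp
    ring
  have e₂ : a / (t - s + a) * (s - a) + (t - s) / (t - s + a) * t = t - a := by
    field_simp
    ring
  rw [e₁] at h₁
  rw [e₂] at h₂
  linear_combination h₁ + h₂ - ((s - a) ^ β + t ^ β) * hlm

/-- For the power-law shape function `A(t) = αt^β` with `0 < β ≤ 1`,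
the variance comparison `Var(Z_t^{(2)}) ≥ Var(Y_t^{(1)})` for all `t, T > 0` holds
if and only if `(1−ρ₂)^β ≥ (1 − ρ₁)²`. -/
theorem power_law_variance_comparison_iff
    (α β ρ₁ ρ₂ : ℝ) (hα : 0 < α) (hβ₀ : 0 < β) (hβ₁ : β ≤ 1)
    (hρ₁ : ρ₁ ∈ Ioo (0:ℝ) 1) (hρ₂ : ρ₂ ∈ Ioo (0:ℝ) 1) :
    (∀ T : ℝ, 0 < T → ∀ n : ℕ, ∀ t : ℝ, (n : ℝ) * T ≤ t → t < ((n : ℝ) + 1) * T →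
      α * t ^ β - ρ₁ * (2 - ρ₁) * (α * ((n : ℝ) * T) ^ β)
        ≤ α * (t - ρ₂ * ((n : ℝ) * T)) ^ β)
    ↔ (1 - ρ₁) ^ (2:ℕ) ≤ (1 - ρ₂) ^ β := by
  obtain ⟨hρ₂₀, hρ₂₁⟩ := hρ₂
  constructor
  · intro h
    have h₁ := h 1 one_pos 1 1 (by norm_num) (by norm_num)
    simp only [Nat.cast_one, mul_one, Real.one_rpow] at h₁
    refine le_of_mul_le_mul_left ?_ hα
    linarith
  · intro h T hT n t hnt _
    have hs : 0 ≤ (n : ℝ) * T := by positivity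
    generalize (n : ℝ) * T = s at hs hnt ⊢
    rcases hs.eq_or_lt with rfl | hs
    · simp [Real.zero_rpow hβ₀.ne']
    · have hinc := rpow_increment_antitone hβ₀ hβ₁ (mul_pos hρ₂₀ hs)
        (mul_le_of_le_one_left hs.le hρ₂₁.le) hnt
      have hfac : (s - ρ₂ * s) ^ β = (1 - ρ₂) ^ β * s ^ β := by
        rw [← Real.mul_rpow (by linarith) hs.le]
        ring_nf
      have hrep := mul_le_mul_of_nonneg_right h (Real.rpow_nonneg hs.le β)
      have key : t ^ β - ρ₁ * (2 - ρ₁) * s ^ β ≤ (t - ρ₂ * s) ^ β := by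
        rw [hfac] at hinc
        linarith
      linarith [mul_le_mul_of_nonneg_left key hα.le]
end

section
/- Let A : [0,∞) → [0,∞) be nondecreasing and convex with A(0) = 0, let b > 0, T > 0, n ∈ ℕ, t ∈ [nT, (n+1)T) and ρ₂ ∈ (0,1), and assume a_Z := A(t − ρ₂nT) − A((1−ρ₂)nT) > 0 and a_Y := A(t) − A(nT) > 0. Then Γ(a_Z, b) ≺_lr Γ(a_Y, b): the ratio x ↦ f_{a_Y, b}(x) / f_{a_Z, b}(x) is nondecreasing on (0,∞). In the maintenance interpretation: the increment Z_t^{(2)} − Z_{nT}^{(2)} of the ARA1 model is smaller in the likelihood ratio order than the increment Y_t^{(1)} − Y_{nT}^{(1)} of the ARD1 model. -/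
/-!
Both increments are increments of `A` over a time step of the same length `h = t - nT`, started
at `(1 - ρ₂)nT` for ARA1 and at the later time `nT` for ARD1. Convexity makes the later one at
least as large (`ConvexOn.increment_le`). Two gamma densities with the same rate and shapes
`a ≤ a'` have ratio `C * x ^ (a' - a)` with `C ≥ 0` on `(0,∞)`: the exponentials cancel, and the
ratio is nondecreasing (`gammaPDFReal_div_monotoneOn`).
-/

open ProbabilityTheory Set

/-- Increments of a convex function over steps of equal length `h` grow with the starting point. -/
theorem ConvexOn.increment_le {s : Set ℝ} {A : ℝ → ℝ} (hA : ConvexOn ℝ s A) {u v h : ℝ}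
    (hu : u ∈ s) (hvh : v + h ∈ s) (huv : u ≤ v) (hh : 0 ≤ h) :
    A (u + h) - A u ≤ A (v + h) - A v := by
  rcases hh.eq_or_lt with rfl | hpos
  · simp
  have hL : 0 < v - u + h := by linarith
  have hd : 0 ≤ (v - u) / (v - u + h) := div_nonneg (by linarith) hL.le
  have he : 0 ≤ h / (v - u + h) := div_nonneg hh hL.le
  have hsum : (v - u) / (v - u + h) + h / (v - u + h) = 1 := by
    rw [← add_div, div_self hL.ne']
  -- `u + h` and `v` are combinations of the endpoints `u`, `v + h` with swapped weights, so
  -- adding the two convexity inequalities gives `A (u + h) + A v ≤ A u + A (v + h)`.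
  have h1 := hA.2 hu hvh hd he hsum
  have h2 := hA.2 hu hvh he hd (by rw [add_comm, hsum])
  have e1 : (v - u) / (v - u + h) * u + h / (v - u + h) * (v + h) = u + h := by
    field_simp
    ring
  have e2 : h / (v - u + h) * u + (v - u) / (v - u + h) * (v + h) = v := by
    field_simp
    ring
  simp only [smul_eq_mul] at h1 h2
  rw [e1] at h1
  rw [e2] at h2
  linear_combination h1 + h2 + (A u + A (v + h)) * hsum

/-- At a fixed rate, gamma densities increase in the likelihood ratio order with the shape. -/
theorem gammaPDFReal_div_monotoneOn {a a' b : ℝ} (ha : 0 < a) (haa' : a ≤ a') (hb : 0 < b) :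
    MonotoneOn (fun x => gammaPDFReal a' b x / gammaPDFReal a b x) (Ioi (0:ℝ)) := by
  have hG : 0 < Real.Gamma a := Real.Gamma_pos_of_pos ha
  have hG' : 0 < Real.Gamma a' := Real.Gamma_pos_of_pos (ha.trans_le haa')
  have key : ∀ x ∈ Ioi (0:ℝ), gammaPDFReal a' b x / gammaPDFReal a b x =
      (b ^ a' / Real.Gamma a') / (b ^ a / Real.Gamma a) * x ^ (a' - a) := by
    intro x hx
    have hx : 0 < x := hx
    rw [show a' - a = (a' - 1) - (a - 1) by ring, Real.rpow_sub hx]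
    simp only [gammaPDFReal, if_pos hx.le]
    rw [mul_div_mul_right _ _ (Real.exp_pos _).ne', mul_div_mul_comm]
  intro x hx y hy hxy
  simp only [key x hx, key y hy]
  exact mul_le_mul_of_nonneg_left
    (Real.rpow_le_rpow (le_of_lt hx) hxy (by linarith)) (by positivity)

/-- If `A` is nondecreasing and convex with `A(0) = 0`, then the ARA1 increment
`Γ(A(t−ρ₂nT)−A((1−ρ₂)nT), b)` is smaller in the likelihood ratio order than the ARD1
increment `Γ(A(t)−A(nT), b)`: the density ratio is nondecreasing on `(0,∞)`. -/
theorem ARA1_increment_lr_ARD1_increment_convex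
    (A : ℝ → ℝ) (hAmono : MonotoneOn A (Ici 0)) (hAconv : ConvexOn ℝ (Ici 0) A)
    (hAnonneg : ∀ s, 0 ≤ s → 0 ≤ A s) (hA0 : A 0 = 0)
    (b T : ℝ) (hb : 0 < b) (hT : 0 < T) (n : ℕ) (t : ℝ)
    (ht₁ : (n : ℝ) * T ≤ t) (ht₂ : t < ((n : ℝ) + 1) * T)
    (ρ₂ : ℝ) (hρ₂ : ρ₂ ∈ Ioo (0:ℝ) 1)
    (haZ : 0 < A (t - ρ₂ * ((n : ℝ) * T)) - A ((1 - ρ₂) * ((n : ℝ) * T)))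
    (haY : 0 < A t - A ((n : ℝ) * T)) :
    MonotoneOn
      (fun x => gammaPDFReal (A t - A ((n : ℝ) * T)) b x /
        gammaPDFReal (A (t - ρ₂ * ((n : ℝ) * T)) - A ((1 - ρ₂) * ((n : ℝ) * T))) b x)
      (Ioi (0:ℝ)) := by
  refine gammaPDFReal_div_monotoneOn haZ ?_ hb
  have hnT : 0 ≤ (n : ℝ) * T := by positivity
  have h := hAconv.increment_le (u := (1 - ρ₂) * ((n : ℝ) * T)) (v := (n : ℝ) * T)
    (h := t - (n : ℝ) * T) (mul_nonneg (by linarith [hρ₂.2]) hnT)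
    (by rw [mem_Ici]; linarith)
    (by nlinarith [mul_nonneg hρ₂.1.le hnT]) (by linarith)
  rwa [show (1 - ρ₂) * ((n : ℝ) * T) + (t - (n : ℝ) * T) = t - ρ₂ * ((n : ℝ) * T) by ring,
    add_sub_cancel] at h
end

section
/- Let A : [0,∞) → [0,∞) be nondecreasing and convex with A(0) = 0, let b > 0, T > 0, n ∈ ℕ, t ∈ [nT, (n+1)T) and ρ₂ ∈ (0,1), and assume a_Z := A(t − ρ₂nT) − A((1−ρ₂)nT) > 0 and a_Y := A(t) − A(nT) > 0. Then the ARD1 increment is smaller than the ARA1 increment in the log-concave order: the function y ↦ log( f_{a_Y, b}(y) / f_{a_Z, b}(y) ) is concave on (0,∞). -/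
open ProbabilityTheory Set


/-!
The exponential factors of the two gamma densities share the rate `b` and cancel in the ratio, so
that `log (f_{a,b}(y) / f_{c,b}(y)) = (a - c) * log y + const` on `(0, ∞)`
(`log_gammaPDFReal_div`); this is concave as soon as `c ≤ a`. The inequality `a_Z ≤ a_Y` compares
the increments of `A` over two intervals of the same length `t - nT`, the second being the first
shifted to the right by `ρ₂nT`: increments of a convex function grow under such a shift
(`ConvexOn.add_le_add_of_shift`).
-/

/-- Increments of a convex function over intervals of a fixed length `h` are nondecreasing in the
left endpoint. Both `x + h` and `x + s` are convex combinations of `x` and `x + s + h`, with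
interchanged weights, and the two convexity inequalities add up to the claim. -/
lemma ConvexOn.add_le_add_of_shift {S : Set ℝ} {A : ℝ → ℝ} (hA : ConvexOn ℝ S A) {x s h : ℝ}
    (hx : x ∈ S) (hxsh : x + s + h ∈ S) (hs : 0 ≤ s) (hh : 0 < h) :
    A (x + h) + A (x + s) ≤ A x + A (x + s + h) := by
  have hsh : 0 < s + h := by positivity
  have hw : s / (s + h) + h / (s + h) = 1 := by field_simp
  have h₁ := hA.2 hx hxsh (by positivity : 0 ≤ s / (s + h)) (by positivity : 0 ≤ h / (s + h)) hw
  have h₂ := hA.2 hx hxsh (by positivity : 0 ≤ h / (s + h)) (by positivity : 0 ≤ s / (s + h))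
    (by rw [add_comm, hw])
  simp only [smul_eq_mul] at h₁ h₂
  have e₁ : s / (s + h) * x + h / (s + h) * (x + s + h) = x + h := by field_simp; ring
  have e₂ : h / (s + h) * x + s / (s + h) * (x + s + h) = x + s := by field_simp; ring
  rw [e₁] at h₁
  rw [e₂] at h₂
  have e₃ : h / (s + h) = 1 - s / (s + h) := by linarith
  rw [e₃] at h₁ h₂
  linarith

lemma log_gammaPDFReal_div {a c b y : ℝ} (ha : 0 < a) (hc : 0 < c) (hb : 0 < b) (hy : 0 < y) :
    Real.log (gammaPDFReal a b y / gammaPDFReal c b y) =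
      (a - c) * Real.log y +
        ((a - c) * Real.log b - (Real.log (Real.Gamma a) - Real.log (Real.Gamma c))) := by
  have key : ∀ d : ℝ, 0 < d → Real.log (gammaPDFReal d b y) =
      d * Real.log b - Real.log (Real.Gamma d) + (d - 1) * Real.log y - b * y := by
    intro d hd
    have hG := Real.Gamma_pos_of_pos hd
    rw [gammaPDFReal, if_pos hy.le, Real.log_mul (by positivity) (by positivity),
      Real.log_mul (by positivity) (by positivity), Real.log_div (by positivity) hG.ne',
      Real.log_rpow hb, Real.log_rpow hy, Real.log_exp]
    ring
  rw [Real.log_div (gammaPDFReal_pos ha hb hy).ne' (gammaPDFReal_pos hc hb hy).ne',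
    key a ha, key c hc]
  ring

/-- If `A` is nondecreasing and convex with `A(0) = 0`, then the ARD1 increment
is smaller than the ARA1 increment in the log-concave order: the function
`y ↦ log(f_{a_Y,b}(y) / f_{a_Z,b}(y))` is concave on `(0,∞)`, where
`a_Y = A(t)−A(nT)` and `a_Z = A(t−ρ₂nT)−A((1−ρ₂)nT)`. -/
theorem ARD1_increment_lc_ARA1_increment_convex
    (A : ℝ → ℝ) (hAmono : MonotoneOn A (Ici 0)) (hAconv : ConvexOn ℝ (Ici 0) A)
    (hAnonneg : ∀ s, 0 ≤ s → 0 ≤ A s) (hA0 : A 0 = 0)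
    (b T : ℝ) (hb : 0 < b) (hT : 0 < T) (n : ℕ) (t : ℝ)
    (ht₁ : (n : ℝ) * T ≤ t) (ht₂ : t < ((n : ℝ) + 1) * T)
    (ρ₂ : ℝ) (hρ₂ : ρ₂ ∈ Ioo (0:ℝ) 1)
    (haZ : 0 < A (t - ρ₂ * ((n : ℝ) * T)) - A ((1 - ρ₂) * ((n : ℝ) * T)))
    (haY : 0 < A t - A ((n : ℝ) * T)) :
    ConcaveOn ℝ (Ioi (0:ℝ))
      (fun y => Real.log (gammaPDFReal (A t - A ((n : ℝ) * T)) b y /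
        gammaPDFReal (A (t - ρ₂ * ((n : ℝ) * T)) - A ((1 - ρ₂) * ((n : ℝ) * T))) b y)) := by
  have hu : 0 ≤ (n : ℝ) * T := by positivity
  -- A positive increment `a_Y` excludes the degenerate case `t = nT`.
  have hlt : (n : ℝ) * T < t := by
    refine lt_of_le_of_ne ht₁ fun h => ?_
    rw [← h, sub_self] at haY
    exact haY.false
  have hle : A (t - ρ₂ * ((n : ℝ) * T)) - A ((1 - ρ₂) * ((n : ℝ) * T)) ≤
      A t - A ((n : ℝ) * T) := by
    have h := hAconv.add_le_add_of_shift (x := (1 - ρ₂) * ((n : ℝ) * T))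
      (s := ρ₂ * ((n : ℝ) * T)) (h := t - (n : ℝ) * T)
      (mul_nonneg (by linarith [hρ₂.2]) hu) (by rw [mem_Ici]; linarith)
      (mul_nonneg hρ₂.1.le hu) (by linarith)
    rw [show (1 - ρ₂) * ((n : ℝ) * T) + (t - (n : ℝ) * T) = t - ρ₂ * ((n : ℝ) * T) by ring,
      show (1 - ρ₂) * ((n : ℝ) * T) + ρ₂ * ((n : ℝ) * T) = (n : ℝ) * T by ring,
      show (n : ℝ) * T + (t - (n : ℝ) * T) = t by ring] at h
    linarith
  have hlog := (strictConcaveOn_log_Ioi.concaveOn.smul (sub_nonneg.2 hle)).add_const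
    ((A t - A ((n : ℝ) * T) -
        (A (t - ρ₂ * ((n : ℝ) * T)) - A ((1 - ρ₂) * ((n : ℝ) * T)))) * Real.log b -
      (Real.log (Real.Gamma (A t - A ((n : ℝ) * T))) -
        Real.log (Real.Gamma (A (t - ρ₂ * ((n : ℝ) * T)) - A ((1 - ρ₂) * ((n : ℝ) * T))))))
  refine hlog.congr fun y hy => ?_
  simpa using (log_gammaPDFReal_div haY haZ hb hy).symm
end

section
/- Let A : [0,∞) → [0,∞) be continuous, nondecreasing and concave with A(0) = 0, let ρ₁, ρ₂ ∈ (0,1) satisfy A((1−ρ₂)s) ≥ (1−ρ₁)A(s) for all s > 0, and let b > 0, T > 0, n ∈ ℕ, t ∈ [nT, (n+1)T) with A(nT) > 0 and A(t) > A(nT). Let μ_Y = Γ(A(nT), b/(1−ρ₁)) ∗ Γ(A(t)−A(nT), b) (the law of the ARD1 deterioration Y_t^{(1)}) and μ_Z = Γ(A(t−ρ₂nT), b) (the law of the ARA1 deterioration Z_t^{(2)}). Then μ_Y ≺_icx μ_Z: for all x ≥ 0, ∫_x^∞ μ_Y((u,∞)) du ≤ ∫_x^∞ μ_Z((u,∞))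 du. -/
/-!
Write `γ_a` for the law `Γ(a, b)`, `s = nT`, `r = 1 - ρ₁`, and `L(μ, k) = ∫ (y - k)⁺ dμ(y)`
for the stop-loss transform. By Tonelli the integrated tail `∫_x^∞ μ((u, ∞)) du` equals `L(μ, x)`
(`integral_tail_eq`), so the claim compares stop-loss transforms.

Rescaling is a mean-preserving contraction (`stopLoss_le`): `L(Γ(a, b/r), k) ≤ L(γ_{ra}, k)`.
Indeed, realise `S ~ γ_a` as `S = X + X'` with independent `X ~ γ_{ra}` and `X' ~ γ_{(1-r)a}`;
then `E[X | S] = rS`, so that `E(rS - k)⁺ ≤ E(X - k)⁺` by Jensen's inequality, where `rS ~ Γ(a, b/r)`.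
The only consequence of `E[X | S] = rS` needed is `E[X; S > σ] = r E[S; S > σ]`, and it follows
from size-biasing: `y dγ_a(y) = (a / b) dγ_{a+1}(y)` (`lintegral_ofReal_mul_gamma`).

Convolving with `γ_c`, `c = A(t) - A(s)`, gives `L(μ_Y, x) ≤ L(γ_{ra + c}, x)` for `a = A(s)`.
Concavity of `A` (`concave_exchange`) together with `A((1-ρ₂)s) ≥ rA(s)` yields
`ra + c ≤ A(t - ρ₂s)`, and `γ_p` is stochastically increasing in `p` (`lintegral_gamma_mono`).

Both halves use `γ_p ∗ γ_q = γ_{p+q}` (`gamma_conv`), obtained from the moment generating functions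
`t ↦ (b / (b - t))^a`. All integrals of nonnegative functions are taken in `ℝ≥0∞`, with
`ENNReal.ofReal (y - k)` playing the part of `(y - k)⁺`.
-/

open ProbabilityTheory Set MeasureTheory
open scoped ENNReal

/-! ### Stop-loss transform -/

/-- The integrated tail of a law is its stop-loss transform `∫ (y - x)⁺ dμ(y)`. -/
theorem integral_tail_eq (μ : Measure ℝ) [IsProbabilityMeasure μ] (x : ℝ) :
    ∫ u in Ioi x, (μ (Ioi u)).toReal = (∫⁻ y, ENNReal.ofReal (y - x) ∂μ).toReal := by
  have hm : MeasurableSet {p : ℝ × ℝ | p.1 < p.2} := measurableSet_lt measurable_fst measurable_snd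
  have hanti : Antitone fun u : ℝ => μ (Ioi u) := fun u v h => measure_mono (Ioi_subset_Ioi h)
  rw [integral_toReal hanti.measurable.aemeasurable (ae_of_all _ fun u => measure_lt_top _ _)]
  congr 1
  have h1 (u : ℝ) : μ (Ioi u) = ∫⁻ y, {p : ℝ × ℝ | p.1 < p.2}.indicator 1 (u, y) ∂μ := by
    rw [← lintegral_indicator_one measurableSet_Ioi]; rfl
  simp_rw [h1]
  rw [lintegral_lintegral_swap (f := fun u y => {p : ℝ × ℝ | p.1 < p.2}.indicator 1 (u, y))
    ((measurable_one.indicator hm).aemeasurable)]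
  refine lintegral_congr fun y => ?_
  have h2 (u : ℝ) : {p : ℝ × ℝ | p.1 < p.2}.indicator (1 : ℝ × ℝ → ℝ≥0∞) (u, y)
      = (Iio y).indicator 1 u := rfl
  simp_rw [h2]
  rw [lintegral_indicator_one measurableSet_Iio, Measure.restrict_apply measurableSet_Iio,
    inter_comm, Ioi_inter_Iio, Real.volume_Ioo]

/-! ### Integrals against gamma laws -/

theorem measurable_gammaPDF' (a b : ℝ) : Measurable (gammaPDF a b) :=
  (measurable_gammaPDFReal a b).ennreal_ofReal

theorem gamma_lintegral (a b : ℝ) {f : ℝ → ℝ≥0∞} (hf : Measurable f) :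
    ∫⁻ y, f y ∂(gammaMeasure a b) = ∫⁻ y in Ioi 0, gammaPDF a b y * f y := by
  rw [gammaMeasure, lintegral_withDensity_eq_lintegral_mul _ (measurable_gammaPDF' a b) hf,
    setLIntegral_congr Ioi_ae_eq_Ici, ← lintegral_indicator measurableSet_Ici]
  refine lintegral_congr fun y => ?_
  by_cases hy : 0 ≤ y
  · simp [hy]
  · simp [hy, gammaPDF_of_neg (not_le.mp hy)]

/-- Size-biasing a gamma law raises its shape parameter by one. -/
theorem lintegral_ofReal_mul_gamma {a b : ℝ} (ha : 0 < a) (hb : 0 < b) {f : ℝ → ℝ≥0∞}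
    (hf : Measurable f) :
    ∫⁻ y, ENNReal.ofReal y * f y ∂(gammaMeasure a b)
      = ENNReal.ofReal (a / b) * ∫⁻ y, f y ∂(gammaMeasure (a + 1) b) := by
  rw [gamma_lintegral a b (by fun_prop), gamma_lintegral (a + 1) b hf,
    ← lintegral_const_mul _
      (f := fun y => gammaPDF (a + 1) b y * f y) ((measurable_gammaPDF' _ _).mul hf)]
  refine setLIntegral_congr_fun measurableSet_Ioi fun y (hy : 0 < y) => ?_
  simp only [← mul_assoc, gammaPDF]
  rw [← ENNReal.ofReal_mul (gammaPDFReal_nonneg ha hb y), ← ENNReal.ofReal_mul (by positivity)]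
  congr 2
  have hG := Real.Gamma_pos_of_pos ha
  rw [gammaPDFReal, gammaPDFReal, if_pos hy.le, if_pos hy.le, Real.Gamma_add_one ha.ne',
    Real.rpow_add_one hb.ne', show a + 1 - 1 = a - 1 + 1 by ring, Real.rpow_add_one hy.ne']
  field_simp

/-- `Γ(a, b/r)` is the image of `Γ(a, b)` under multiplication by `r`. -/
theorem gamma_scale {a b r : ℝ} (hb : 0 < b) (hr : 0 < r) {f : ℝ → ℝ≥0∞} (hf : Measurable f) :
    ∫⁻ y, f y ∂(gammaMeasure a (b / r)) = ∫⁻ y, f (r * y) ∂(gammaMeasure a b) := by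
  rw [gammaMeasure, gammaMeasure,
    lintegral_withDensity_eq_lintegral_mul _ (measurable_gammaPDF' _ _) hf,
    lintegral_withDensity_eq_lintegral_mul _ (measurable_gammaPDF' _ _) (by fun_prop)]
  conv_lhs => rw [← Real.smul_map_volume_mul_left hr.ne']
  rw [lintegral_smul_measure,
    lintegral_map ((measurable_gammaPDF' _ _).mul hf) (by fun_prop), smul_eq_mul,
    ← lintegral_const_mul _ (by have := measurable_gammaPDF' a (b / r); simp only [Pi.mul_apply]; fun_prop)]
  refine lintegral_congr fun y => ?_
  simp only [Pi.mul_apply, ← mul_assoc, gammaPDF]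
  rw [← ENNReal.ofReal_mul (by positivity), abs_of_pos hr]
  congr 2
  unfold gammaPDFReal
  by_cases hy : 0 ≤ y
  · rw [if_pos hy, if_pos (by positivity), Real.mul_rpow hr.le hy, Real.div_rpow hb.le hr.le,
      Real.rpow_sub_one hr.ne']
    field_simp
  · rw [if_neg hy, if_neg (by simpa [mul_nonneg_iff_of_pos_left hr] using hy), mul_zero]

theorem gamma_ae_nonneg (a b : ℝ) : ∀ᵐ y ∂(gammaMeasure a b), 0 ≤ y := by
  rw [ae_iff]
  have : {y : ℝ | ¬ 0 ≤ y} = Iio 0 := by ext; simp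
  rw [this, gammaMeasure, withDensity_apply _ measurableSet_Iio, lintegral_gammaPDF_of_nonpos le_rfl]

/-! ### Convolution of gamma laws -/

theorem gamma_lexp {a b t : ℝ} (ha : 0 < a) (hb : 0 < b) (ht : t < b) :
    ∫⁻ y, ENNReal.ofReal (Real.exp (t * y)) ∂(gammaMeasure a b)
      = ENNReal.ofReal ((b / (b - t)) ^ a) := by
  have hbt : 0 < b - t := by linarith
  have hG := Real.Gamma_pos_of_pos ha
  rw [gammaMeasure, lintegral_withDensity_eq_lintegral_mul _ (measurable_gammaPDF' a b)
    (by fun_prop)]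
  trans ∫⁻ y, ENNReal.ofReal ((b / (b - t)) ^ a) * gammaPDF a (b - t) y
  · refine lintegral_congr fun y => ?_
    simp only [Pi.mul_apply, gammaPDF]
    rw [← ENNReal.ofReal_mul (gammaPDFReal_nonneg ha hb y), ← ENNReal.ofReal_mul (by positivity)]
    congr 1
    unfold gammaPDFReal
    split_ifs with hy
    · rw [Real.div_rpow hb.le hbt.le, mul_assoc, ← Real.exp_add,
        show -(b * y) + t * y = -((b - t) * y) by ring]
      have := Real.rpow_pos_of_pos hbt a
      field_simp
    · simp
  · rw [lintegral_const_mul _ (measurable_gammaPDF' _ _), lintegral_gammaPDF_eq_one ha hbt, mul_one]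

/-- At or beyond the rate `b` the exponential moment is infinite, being at least
every value `(b / (b - u)) ^ a` with `u < b`. -/
theorem gamma_lexp_top {a b t : ℝ} (ha : 0 < a) (hb : 0 < b) (ht : b ≤ t) :
    ∫⁻ y, ENNReal.ofReal (Real.exp (t * y)) ∂(gammaMeasure a b) = ∞ := by
  refine ENNReal.eq_top_of_forall_nnreal_le fun N => ?_
  -- The argument `u = b - b / y` gives `b / (b - u) = y`, whose `a`-th power is `N + 1`.
  set y : ℝ := ((N : ℝ) + 1) ^ a⁻¹ with hy
  have hy0 : 0 < y := by positivity
  have hlt : b - b / y < b := sub_lt_self b (by positivity)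
  calc (N : ℝ≥0∞) = ENNReal.ofReal N := by simp
    _ ≤ ENNReal.ofReal ((b / (b - (b - b / y))) ^ a) := by
      rw [show b / (b - (b - b / y)) = y by field_simp; ring_nf, hy,
        Real.rpow_inv_rpow (by positivity) ha.ne']
      exact ENNReal.ofReal_le_ofReal (by linarith)
    _ = ∫⁻ x, ENNReal.ofReal (Real.exp ((b - b / y) * x)) ∂(gammaMeasure a b) :=
      (gamma_lexp ha hb hlt).symm
    _ ≤ _ := lintegral_mono_ae ((gamma_ae_nonneg a b).mono fun x hx =>
      ENNReal.ofReal_le_ofReal (Real.exp_le_exp.2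
        (mul_le_mul_of_nonneg_right (hlt.le.trans ht) hx)))

/-- The two exponential moments agree at every real argument (both are infinite from `b` on), and
the moment generating function, finite around `0`, determines the characteristic function. -/
theorem gamma_conv {p q b : ℝ} (hp : 0 < p) (hq : 0 < q) (hb : 0 < b) :
    (gammaMeasure p b).conv (gammaMeasure q b) = gammaMeasure (p + q) b := by
  have hpq := add_pos hp hq
  have := isProbabilityMeasure_gammaMeasure hp hb
  have := isProbabilityMeasure_gammaMeasure hq hb
  have := isProbabilityMeasure_gammaMeasure hpq hb
  have hmgf (μ : Measure ℝ) (t : ℝ) :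
      mgf id μ t = (∫⁻ y, ENNReal.ofReal (Real.exp (t * y)) ∂μ).toReal := by
    rw [mgf, integral_eq_lintegral_of_nonneg_ae (ae_of_all _ fun _ => (Real.exp_pos _).le)
      (by fun_prop)]
    rfl
  have hM (t : ℝ) : ∫⁻ y, ENNReal.ofReal (Real.exp (t * y))
        ∂((gammaMeasure p b).conv (gammaMeasure q b))
      = ∫⁻ y, ENNReal.ofReal (Real.exp (t * y)) ∂(gammaMeasure (p + q) b) := by
    rw [Measure.lintegral_conv (by fun_prop)]
    simp_rw [mul_add, Real.exp_add, ENNReal.ofReal_mul (Real.exp_pos _).le]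
    simp_rw [lintegral_const_mul _
      (show Measurable fun y => ENNReal.ofReal (Real.exp (t * y)) by fun_prop)]
    rw [lintegral_mul_const _ (by fun_prop)]
    rcases lt_or_ge t b with ht | ht
    · have : 0 < b / (b - t) := div_pos hb (by linarith)
      rw [gamma_lexp hp hb ht, gamma_lexp hq hb ht, gamma_lexp hpq hb ht,
        ← ENNReal.ofReal_mul (by positivity), Real.rpow_add this]
    · rw [gamma_lexp_top hp hb ht, gamma_lexp_top hq hb ht, gamma_lexp_top hpq hb ht,
        ENNReal.top_mul_top]
  have hmem : (0 : ℝ) ∈ interior (integrableExpSet id (gammaMeasure (p + q) b)) := by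
    refine mem_interior.2 ⟨Iio b, fun t ht => ?_, isOpen_Iio, hb⟩
    refine (lintegral_ofReal_ne_top_iff_integrable (by fun_prop)
      (ae_of_all _ fun _ => (Real.exp_pos _).le)).1 ?_
    simp only [id]
    rw [gamma_lexp hpq hb ht]
    exact ENNReal.ofReal_ne_top
  have heq := eqOn_complexMGF_of_mgf (X := id) (Y := id) (μ := gammaMeasure (p + q) b)
    (μ' := (gammaMeasure p b).conv (gammaMeasure q b)) (by ext t; rw [hmgf, hmgf, hM])
  refine Measure.ext_of_charFun (funext fun t => ?_)
  rw [← complexMGF_id_mul_I, ← complexMGF_id_mul_I]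
  exact (heq (by simpa using hmem)).symm

/-! ### Comparison of gamma laws -/

/-- Gamma laws of a fixed rate increase stochastically with the shape parameter. -/
theorem lintegral_gamma_mono {p q b : ℝ} (hp : 0 < p) (hpq : p ≤ q) (hb : 0 < b) {f : ℝ → ℝ≥0∞}
    (hf : Monotone f) :
    ∫⁻ y, f y ∂(gammaMeasure p b) ≤ ∫⁻ y, f y ∂(gammaMeasure q b) := by
  rcases hpq.eq_or_lt with rfl | h
  · rfl
  have := isProbabilityMeasure_gammaMeasure hp hb
  have := isProbabilityMeasure_gammaMeasure (sub_pos.2 h) hb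
  have hc := gamma_conv hp (sub_pos.2 h) hb
  rw [add_sub_cancel] at hc
  rw [← hc, Measure.lintegral_conv hf.measurable]
  refine lintegral_mono fun y => ?_
  calc f y = ∫⁻ _, f y ∂(gammaMeasure (q - p) b) := by simp
    _ ≤ _ := lintegral_mono_ae ((gamma_ae_nonneg _ _).mono fun z hz => hf (by linarith))

theorem lintegral_ofReal_gamma {a b : ℝ} (ha : 0 < a) (hb : 0 < b) :
    ∫⁻ y, ENNReal.ofReal y ∂(gammaMeasure a b) = ENNReal.ofReal (a / b) := by
  have := isProbabilityMeasure_gammaMeasure (add_pos ha one_pos) hb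
  simpa using lintegral_ofReal_mul_gamma ha hb (f := 1) measurable_one

/-- Stop-loss comparison of `Γ(a, b/r)` with `Γ(ra, b)`, two laws of the same mean. For `k ≥ 0` and
`X`, `S` as in the module comment, it is the chain
`E(rS - k)⁺ + k P(S > k/r) = E[rS; S > k/r] = E[X; S > k/r] ≤ E(X - k)⁺ + k P(S > k/r)`.
Negative thresholds are needed too, as they arise when conditioning on an independent summand. -/
theorem stopLoss_le {a b r : ℝ} (ha : 0 < a) (hb : 0 < b) (hr : 0 < r) (hr1 : r < 1) (k : ℝ) :
    ∫⁻ y, ENNReal.ofReal (y - k) ∂(gammaMeasure a (b / r))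
      ≤ ∫⁻ y, ENNReal.ofReal (y - k) ∂(gammaMeasure (r * a) b) := by
  have hp : 0 < r * a := by positivity
  have hq : 0 < (1 - r) * a := mul_pos (by linarith) ha
  have hbr : 0 < b / r := by positivity
  have := isProbabilityMeasure_gammaMeasure ha hbr
  have := isProbabilityMeasure_gammaMeasure ha hb
  have := isProbabilityMeasure_gammaMeasure hp hb
  have := isProbabilityMeasure_gammaMeasure hq hb
  have hmean : a / (b / r) = r * a / b := by field_simp
  rcases lt_or_ge k 0 with hk | hk
  -- For `k < 0` the positive part is inactive, and both sides equal the common mean minus `k`.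
  · have h (c d : ℝ) (hc : 0 < c) (hd : 0 < d) : ∫⁻ y, ENNReal.ofReal (y - k) ∂(gammaMeasure c d)
        = ENNReal.ofReal (c / d) + ENNReal.ofReal (-k) := by
      have := isProbabilityMeasure_gammaMeasure hc hd
      calc _ = ∫⁻ y, (ENNReal.ofReal y + ENNReal.ofReal (-k)) ∂(gammaMeasure c d) :=
            lintegral_congr_ae ((gamma_ae_nonneg _ _).mono fun y hy => by
              simp only [sub_eq_add_neg]; exact ENNReal.ofReal_add hy (by linarith))
        _ = _ := by
          rw [lintegral_add_right _ measurable_const, lintegral_ofReal_gamma hc hd]; simp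
    rw [h _ _ ha hbr, h _ _ hp hb, hmean]
  set P : ℝ≥0∞ := gammaMeasure a b (Ioi (k / r)) with hP
  have hPtop : ENNReal.ofReal k * P ≠ ∞ := ENNReal.mul_ne_top ENNReal.ofReal_ne_top (measure_ne_top _ _)
  set I : ℝ → ℝ≥0∞ := (Ioi (k / r)).indicator 1 with hI
  have hIm : Measurable I := measurable_one.indicator measurableSet_Ioi
  have hI1 (y) : I y ≤ 1 := indicator_le_self' (f := 1) (by simp) y
  have hIP : ∫⁻ y, I y ∂(gammaMeasure a b) = P := lintegral_indicator_one measurableSet_Ioi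
  have hsum : r * a + (1 - r) * a = a := by ring
  have hconv : (gammaMeasure (r * a) b).conv (gammaMeasure ((1 - r) * a) b) = gammaMeasure a b := by
    rw [gamma_conv hp hq hb, hsum]
  have hconv' : (gammaMeasure (r * a + 1) b).conv (gammaMeasure ((1 - r) * a) b)
      = gammaMeasure (a + 1) b := by
    rw [gamma_conv (by positivity) hq hb]; congr 1; ring
  refine (ENNReal.add_le_add_iff_right hPtop).1 ?_
  have hG : Measurable fun y => ∫⁻ z, I (y + z) ∂(gammaMeasure ((1 - r) * a) b) :=
    Measurable.lintegral_prod_right' (f := fun p : ℝ × ℝ => I (p.1 + p.2)) (by fun_prop)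
  calc
    _ = ∫⁻ y, (ENNReal.ofReal (r * y - k) + ENNReal.ofReal k * I y) ∂(gammaMeasure a b) := by
      rw [gamma_scale hb hr (by fun_prop), lintegral_add_left (by fun_prop),
        lintegral_const_mul _ hIm, hIP]
    _ = ∫⁻ y, ENNReal.ofReal r * (ENNReal.ofReal y * I y) ∂(gammaMeasure a b) := by
      refine lintegral_congr fun y => ?_
      by_cases hy : k / r < y
      · have h1 : k < r * y := by rwa [div_lt_iff₀' hr] at hy
        simp only [hI, indicator_of_mem (show y ∈ Ioi (k / r) from hy), Pi.one_apply, mul_one]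
        rw [← ENNReal.ofReal_add (by linarith) hk, ← ENNReal.ofReal_mul hr.le, sub_add_cancel]
      · have h1 : r * y ≤ k := by rwa [div_lt_iff₀' hr, not_lt] at hy
        simp only [hI, indicator_of_notMem (show y ∉ Ioi (k / r) from hy), mul_zero, add_zero]
        exact ENNReal.ofReal_of_nonpos (by linarith)
    _ = ENNReal.ofReal (r * a / b) * ∫⁻ y, I y ∂(gammaMeasure (a + 1) b) := by
      rw [lintegral_const_mul _ (by fun_prop), lintegral_ofReal_mul_gamma ha hb hIm, ← mul_assoc,
        ← ENNReal.ofReal_mul hr.le, mul_div_assoc]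
    _ = ∫⁻ y, ENNReal.ofReal y * ∫⁻ z, I (y + z) ∂(gammaMeasure ((1 - r) * a) b)
          ∂(gammaMeasure (r * a) b) := by
      rw [← hconv', Measure.lintegral_conv hIm, lintegral_ofReal_mul_gamma hp hb hG]
    _ ≤ ∫⁻ y, (ENNReal.ofReal (y - k)
          + ENNReal.ofReal k * ∫⁻ z, I (y + z) ∂(gammaMeasure ((1 - r) * a) b))
          ∂(gammaMeasure (r * a) b) := by
      refine lintegral_mono fun y => ?_
      have hle : ∫⁻ z, I (y + z) ∂(gammaMeasure ((1 - r) * a) b) ≤ 1 :=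
        (lintegral_mono fun z => hI1 (y + z)).trans_eq (by simp)
      generalize ∫⁻ z, I (y + z) ∂(gammaMeasure ((1 - r) * a) b) = J at hle
      calc ENNReal.ofReal y * J ≤ (ENNReal.ofReal (y - k) + ENNReal.ofReal k) * J := by
            gcongr
            simpa using ENNReal.ofReal_add_le (p := y - k) (q := k)
        _ ≤ _ := by
          rw [add_mul]
          gcongr
          exact mul_le_of_le_one_right' hle
    _ = _ := by
      rw [lintegral_add_left (by fun_prop), lintegral_const_mul _ hG,
        ← Measure.lintegral_conv hIm, hconv, hIP]

/-! ### Comparison of the two repair models -/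

/-- Concavity as an exchange inequality: `s` and `u + t - s` are the inner, `u` and `t` the outer
points of two pairs with the same sum. -/
theorem concave_exchange {A : ℝ → ℝ} (hA : ConcaveOn ℝ (Ici 0) A) {u s t : ℝ} (hu : 0 ≤ u)
    (hus : u < s) (hst : s ≤ t) : A u + A t ≤ A s + A (u + t - s) := by
  have hd : 0 < t - u := by linarith
  have ht : t ∈ Ici (0:ℝ) := by simp only [mem_Ici]; linarith
  have h0 : 0 ≤ (t - s) / (t - u) := div_nonneg (by linarith) hd.le
  have h1 : 0 ≤ (s - u) / (t - u) := div_nonneg (by linarith) hd.le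
  have h2 := hA.2 (mem_Ici.2 hu) ht h0 h1 (by field_simp; ring)
  have h3 := hA.2 (mem_Ici.2 hu) ht h1 h0 (by field_simp; ring)
  simp only [smul_eq_mul] at h2 h3
  rw [show (t - s) / (t - u) * u + (s - u) / (t - u) * t = s by field_simp; ring] at h2
  rw [show (s - u) / (t - u) * u + (t - s) / (t - u) * t = u + t - s by field_simp; ring] at h3
  have h4 : (t - s) / (t - u) + (s - u) / (t - u) = 1 := by field_simp; ring
  linear_combination h2 + h3 + (- A u - A t) * h4

/-- Theorem, concave case: If `A` is concave with
`A((1−ρ₂)s) ≥ (1−ρ₁)A(s)` for all `s > 0`, then the ARD1 deterioration law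
`μ_Y = Γ(A(nT), b/(1−ρ₁)) ∗ Γ(A(t)−A(nT), b)` is smaller in the increasing convex order
than the ARA1 law `μ_Z = Γ(A(t−ρ₂nT), b)`. -/
theorem ARD1_icx_ARA1_concave
    (A : ℝ → ℝ) (hAcont : ContinuousOn A (Ici 0)) (hAmono : MonotoneOn A (Ici 0))
    (hAconc : ConcaveOn ℝ (Ici 0) A)
    (hAnonneg : ∀ s, 0 ≤ s → 0 ≤ A s) (hA0 : A 0 = 0)
    (ρ₁ ρ₂ : ℝ) (hρ₁ : ρ₁ ∈ Ioo (0:ℝ) 1) (hρ₂ : ρ₂ ∈ Ioo (0:ℝ) 1)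
    (hshape : ∀ s : ℝ, 0 < s → (1 - ρ₁) * A s ≤ A ((1 - ρ₂) * s))
    (b T : ℝ) (hb : 0 < b) (hT : 0 < T) (n : ℕ) (t : ℝ)
    (ht₁ : (n : ℝ) * T ≤ t) (ht₂ : t < ((n : ℝ) + 1) * T)
    (hAnT : 0 < A ((n : ℝ) * T)) (hAt : A ((n : ℝ) * T) < A t)
    (μY μZ : Measure ℝ)
    (hμY : μY = (gammaMeasure (A ((n : ℝ) * T)) (b / (1 - ρ₁))).conv
      (gammaMeasure (A t - A ((n : ℝ) * T)) b))
    (hμZ : μZ = gammaMeasure (A (t - ρ₂ * ((n : ℝ) * T))) b) :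
    ∀ x : ℝ, 0 ≤ x →
      ∫ u in Ioi x, (μY (Ioi u)).toReal ≤ ∫ u in Ioi x, (μZ (Ioi u)).toReal := by
  intro x hx
  obtain ⟨hρ0, hρ1⟩ := hρ₁
  obtain ⟨hσ0, hσ1⟩ := hρ₂
  set s := (n : ℝ) * T with hs
  have hs0 : 0 < s := by
    refine lt_of_le_of_ne (by positivity) fun h => ?_
    rw [← h, hA0] at hAnT
    exact hAnT.false
  have hr : 0 < 1 - ρ₁ := by linarith
  have hc : 0 < A t - A s := by linarith
  have hbr : 0 < b / (1 - ρ₁) := by positivity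
  have hd : (1 - ρ₁) * A s + (A t - A s) ≤ A (t - ρ₂ * s) := by
    have h1 := concave_exchange hAconc (u := (1 - ρ₂) * s) (s := s) (t := t)
      (mul_nonneg (by linarith) hs0.le) (by nlinarith) ht₁
    have h2 := hshape s hs0
    rw [show (1 - ρ₂) * s + t - s = t - ρ₂ * s by ring] at h1
    linarith
  have hra : 0 < (1 - ρ₁) * A s := by positivity
  have hd0 : 0 < A (t - ρ₂ * s) := by linarith
  have := isProbabilityMeasure_gammaMeasure hAnT hbr
  have := isProbabilityMeasure_gammaMeasure hc hb
  have := isProbabilityMeasure_gammaMeasure hra hb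
  have := isProbabilityMeasure_gammaMeasure hd0 hb
  have hm : Measurable fun y : ℝ => ENNReal.ofReal (y - x) := by fun_prop
  rw [hμY, hμZ, integral_tail_eq, integral_tail_eq]
  refine ENNReal.toReal_mono ?_ ?_
  · refine ne_top_of_le_ne_top (b := ENNReal.ofReal (A (t - ρ₂ * s) / b)) ENNReal.ofReal_ne_top ?_
    rw [← lintegral_ofReal_gamma hd0 hb]
    exact lintegral_mono fun y => ENNReal.ofReal_le_ofReal (by linarith)
  -- Condition on the second summand `z`, which shifts the threshold to `x - z`.
  calc
    _ = ∫⁻ z, ∫⁻ y, ENNReal.ofReal (y - (x - z)) ∂(gammaMeasure (A s) (b / (1 - ρ₁)))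
          ∂(gammaMeasure (A t - A s) b) := by
      rw [Measure.conv_comm, Measure.lintegral_conv hm]
      simp only [show ∀ z y : ℝ, y - (x - z) = z + y - x by intros; ring]
    _ ≤ ∫⁻ z, ∫⁻ y, ENNReal.ofReal (y - (x - z)) ∂(gammaMeasure ((1 - ρ₁) * A s) b)
          ∂(gammaMeasure (A t - A s) b) :=
      lintegral_mono fun z => stopLoss_le hAnT hb hr (by linarith) _
    _ = ∫⁻ y, ENNReal.ofReal (y - x) ∂(gammaMeasure ((1 - ρ₁) * A s + (A t - A s)) b) := by
      rw [← gamma_conv hra hc hb, Measure.conv_comm, Measure.lintegral_conv hm]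
      simp only [show ∀ z y : ℝ, y - (x - z) = z + y - x by intros; ring]
    _ ≤ _ := lintegral_gamma_mono (by linarith) hd hb fun y z h => ENNReal.ofReal_le_ofReal (by linarith)
end

section
/- Let α > 0, β > 1, ρ₂ ∈ (0,1) and ρ₁ = 1 − (1−ρ₂)^β (so that 1−ρ₁ = (1−ρ₂)^β, the 'equivalent' case for the power-law shape function A(t) = αt^β), and define g(x) = x^β − (x − ρ₂)^β − (1 − (1−ρ₂)^{2β}) for x ∈ [1,2). If g(2⁻) = 2^β − (2−ρ₂)^β − (1 − (1−ρ₂)^{2β}) ≤ 0, then for all T > 0, all n ∈ ℕ and all t ∈ [nT, (n+1)T): αt^β − (1 − (1−ρ₂)^{2β})·α(nT)^β ≤ α(t − ρ₂nT)^β (i.e., Var(Y_t^{(1)}) ≤ Var(Z_t^{(2)}) for all t ≥ 0). -/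
/-! For `n = 0` both sides equal `α t ^ β`. For `n ≥ 1`, put `t = x (nT)` with `1 ≤ x ≤ 2`; by
homogeneity the claim becomes `g(x) ≤ 0`, where
`g(x) = x ^ β - (x - ρ₂) ^ β - (1 - (1 - ρ₂) ^ (2 * β))`. Since `y ↦ y ^ β` is convex, its increment
`x ^ β - (x - ρ₂) ^ β` over an interval of fixed length `ρ₂` is monotone in `x`
(`rpow_increment_le`), so `g(x) ≤ g(2) ≤ 0`. -/

open Set Real

/-- Increments of the convex function `y ↦ y ^ β` over intervals of length `r` grow with the
right endpoint. -/
lemma rpow_increment_le_s19 {β r x y : ℝ} (hβ : 1 ≤ β) (hr : 0 < r) (hrx : r ≤ x) (hxy : x ≤ y) :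
    x ^ β - (x - r) ^ β ≤ y ^ β - (y - r) ^ β := by
  have hc := (convexOn_rpow hβ).2
  have hd : 0 < y - x + r := by linarith
  have hx : x - r ∈ Ici (0:ℝ) := by simpa using hrx
  have hy : y ∈ Ici (0:ℝ) := by simp only [mem_Ici]; linarith
  have hw : 0 ≤ r / (y - x + r) := by positivity
  have hv : 0 ≤ (y - x) / (y - x + r) := div_nonneg (by linarith) hd.le
  have hsum : (y - x) / (y - x + r) + r / (y - x + r) = 1 := by field_simp
  -- `x` and `y - r` are convex combinations of `x - r` and `y` with swapped weights.
  have h1 := hc hx hy hv hw hsum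
  have h2 := hc hx hy hw hv (by rw [add_comm]; exact hsum)
  have e1 : (y - x) / (y - x + r) * (x - r) + r / (y - x + r) * y = x := by
    field_simp; ring
  have e2 : r / (y - x + r) * (x - r) + (y - x) / (y - x + r) * y = y - r := by
    field_simp; ring
  simp only [smul_eq_mul] at h1 h2
  rw [e1] at h1
  rw [e2] at h2
  have hv' : (y - x) / (y - x + r) = 1 - r / (y - x + r) := by linarith
  rw [hv'] at h1 h2
  linarith

/-- equivalent case, `A(t) = αt^β`, `β > 1`, `1−ρ₁ = (1−ρ₂)^β`:
if `g(2⁻) = 2^β − (2−ρ₂)^β − (1 − (1−ρ₂)^{2β}) ≤ 0`, then for all `T > 0`, `n ∈ ℕ` and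
`t ∈ [nT, (n+1)T)`: `αt^β − (1 − (1−ρ₂)^{2β})·α(nT)^β ≤ α(t − ρ₂nT)^β`
(i.e. `Var(Y_t^{(1)}) ≤ Var(Z_t^{(2)})` for all `t ≥ 0`). -/
theorem equivalent_case_variance_comparison
    (α β ρ₁ ρ₂ : ℝ) (hα : 0 < α) (hβ : 1 < β)
    (hρ₂ : ρ₂ ∈ Ioo (0:ℝ) 1) (hρ₁ : ρ₁ = 1 - (1 - ρ₂) ^ β)
    (hg : (2:ℝ) ^ β - (2 - ρ₂) ^ β - (1 - (1 - ρ₂) ^ (2 * β)) ≤ 0) :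
    ∀ T : ℝ, 0 < T → ∀ n : ℕ, ∀ t : ℝ, (n : ℝ) * T ≤ t → t < ((n : ℝ) + 1) * T →
      α * t ^ β - (1 - (1 - ρ₂) ^ (2 * β)) * (α * ((n : ℝ) * T) ^ β)
        ≤ α * (t - ρ₂ * ((n : ℝ) * T)) ^ β := by
  intro T hT n t h1 h2
  rcases Nat.eq_zero_or_pos n with rfl | hn
  · simp [Real.zero_rpow (by linarith : β ≠ 0)]
  have hn1 : (1:ℝ) ≤ n := by exact_mod_cast hn
  have hs : 0 < (n:ℝ) * T := by positivity
  have hTs : T ≤ (n:ℝ) * T := by nlinarith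
  have h2' : t ≤ 2 * ((n:ℝ) * T) := by linarith
  generalize (n:ℝ) * T = s at *
  obtain ⟨x, rfl⟩ : ∃ x, t = x * s := ⟨t / s, by field_simp⟩
  have hx1 : 1 ≤ x := by
    by_contra! h
    nlinarith
  have hx2 : x ≤ 2 := le_of_mul_le_mul_right h2' hs
  have hmono := rpow_increment_le_s19 hβ.le hρ₂.1 (hρ₂.2.le.trans hx1) hx2
  have hxr : 0 ≤ x - ρ₂ := by linarith [hρ₂.2]
  rw [← sub_mul, Real.mul_rpow (by linarith) hs.le, Real.mul_rpow hxr hs.le]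
  have hp : 0 < α * s ^ β := by positivity
  have hgx : x ^ β - (1 - (1 - ρ₂) ^ (2 * β)) ≤ (x - ρ₂) ^ β := by linarith
  linear_combination (α * s ^ β) * hgx
end
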